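/- arXiv:2507.15567 — 3 statements merged into one kernel-verified Lean document; each statement's English description precedes it below -/
import Mathlib

section
/- Let n ≥ 2 and let g be a real symmetric (n+1)×(n+1) matrix with rows and columns indexed by {0,1,…,n}, such that g₁₁ = f² for some real f and g₁ₐ = 0 for all 2 ≤ a ≤ n (zero shift). Set α = -g₀₁. Then -det g = f²·(-det g_𝒞) + α²·det g_Σ. -/
/-!
Laplace expansion of `det g` along row `1` has only two nonzero terms, since zero shift kills the
entries `g₁ₐ` with `a ≥ 2`. The diagonal term is `f² · det g_𝒞`. The other is `-g₁₀` times the minor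
omitting row `1` and column `0`; by symmetry the first column of that minor vanishes below `g₀₁`,
so the minor equals `g₀₁ · det g_Σ`.
-/

open Matrix

/-- The boundary block `g_𝒞` of an `(n+1)×(n+1)` matrix `g`: the `n×n` submatrix obtained by
deleting row and column `1` (the induced metric on `𝒞 = {x¹ = 0}`). -/
def gBdry {n : ℕ} (g : Matrix (Fin (n+1)) (Fin (n+1)) ℝ) : Matrix (Fin n) (Fin n) ℝ :=
  g.submatrix (Fin.succAbove 1) (Fin.succAbove 1)

/-- The corner block `g_Σ` of an `(n+1)×(n+1)` matrix `g`: the `(n-1)×(n-1)` submatrix obtained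
by deleting rows and columns `0` and `1` (the induced metric on the corner `Σ`). -/
def gCorner {n : ℕ} (g : Matrix (Fin (n+1)) (Fin (n+1)) ℝ) :
    Matrix (Fin (n-1)) (Fin (n-1)) ℝ :=
  g.submatrix (fun i => ⟨i.1 + 2, by have := i.2; omega⟩)
    (fun i => ⟨i.1 + 2, by have := i.2; omega⟩)

/-- For a symmetric `(n+1)×(n+1)` matrix `g` with `g₁₁ = f²` and zero shift (`g₁ₐ = 0` for
`2 ≤ a ≤ n`), setting `α = -g₀₁`, one has `-det g = f²·(-det g_𝒞) + α²·det g_Σ`. -/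
theorem stmt7 (n : ℕ) (hn : 2 ≤ n) (f : ℝ)
    (g : Matrix (Fin (n+1)) (Fin (n+1)) ℝ) (hsymm : g.IsSymm)
    (h11 : g 1 1 = f ^ 2)
    (hshift : ∀ a : Fin (n+1), 2 ≤ (a : ℕ) → g 1 a = 0) :
    -g.det = f ^ 2 * (-(gBdry g).det) + (-(g 0 1)) ^ 2 * (gCorner g).det := by
  obtain ⟨m, rfl⟩ : ∃ m, n = m + 1 := ⟨n - 1, by omega⟩
  -- The minor omitting row `1` and column `0` has first column `(g₀₁, 0, …, 0)`.
  have hminor : (g.submatrix (Fin.succAbove 1) (Fin.succAbove 0)).det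
      = g 0 1 * (gCorner g).det := by
    rw [det_succ_column_zero, Fin.sum_univ_succ, Finset.sum_eq_zero]
    · have hblock : (g.submatrix (Fin.succAbove 1) (Fin.succAbove 0)).submatrix
          (Fin.succAbove 0) Fin.succ = gCorner g := by
        ext i j
        simp only [gCorner, submatrix_apply, Fin.zero_succAbove, Fin.one_succAbove_succ]
        rfl
      rw [hblock]
      simp
    · intro i _
      have h0 : g i.succ.succ 1 = 0 := by
        rw [← hsymm.apply]
        exact hshift _ (by simp)
      simp [Fin.one_succAbove_succ, h0]
  rw [det_succ_row g 1, Fin.sum_univ_succ, Finset.sum_eq_single (0 : Fin (m + 1)), hminor]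
  · rw [← hsymm.apply 1 0, Fin.succ_zero_eq_one, h11]
    simp only [gBdry, Fin.val_zero, Fin.val_one]
    ring
  · intro j _ hj
    have hpos : 0 < (j : ℕ) := Fin.pos_iff_ne_zero.mpr hj
    rw [hshift j.succ (by simp; omega)]
    simp
  · simp
end

section
/- Let n ≥ 2 and let g be a real symmetric (n+1)×(n+1) matrix with rows and columns indexed by {0,1,…,n}, such that g₁₁ = f² for some real f and g₁ₐ = 0 for all 2 ≤ a ≤ n, and suppose det g_Σ ≠ 0. Set α = -g₀₁. Then α² = (f²·det g_𝒞 - det g)/det g_Σ. Consequently, the corner angle is determined up to sign by the initial and boundary data at the corner: if g' is another such matrix with g'₁₁ = g₁₁, det g' = det g, det g'_𝒞 = det g_𝒞 and det g'_Σ = det g_Σ, then g'₀₁ = g₀₁ or g'₀₁ = -g₀₁. -/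
/-!
Laplace expansion along row `1` has only two nonzero terms, because `g 1 a = 0` for `a ≥ 2`.
The diagonal one is `g 1 1 * det g_𝒞`. The minor in the term of column `0` has first column
`(g 0 1, 0, …, 0)` by symmetry, so it equals `g 0 1 * det g_Σ`. This gives
`det g = g 1 1 * det g_𝒞 - (g 0 1) ^ 2 * det g_Σ` (`det_eq_bdry_sub_corner`), which can be solved
for `(g 0 1) ^ 2`; equal data then give equal squares.
-/

open Matrix

/-- The first column of the minor of `g` that omits row `1` and column `0` is
`(g 0 1, 0, …, 0)`, so expanding along it leaves the corner block. -/
lemma det_minor_eq_corner {m : ℕ} (g : Matrix (Fin (m+2)) (Fin (m+2)) ℝ)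
    (hsymm : g.IsSymm) (hshift : ∀ a : Fin (m+2), 2 ≤ (a : ℕ) → g 1 a = 0) :
    (g.submatrix (Fin.succAbove 1) (Fin.succAbove 0)).det
      = g 0 1 * (gCorner (n := m+1) g).det := by
  -- `succAbove 1` skips the index `1`, so it sends `i + 1` to `i + 2`.
  have hsucc : ∀ i : Fin m, (Fin.succAbove (1 : Fin (m+2)) i.succ) = i.succ.succ := fun i => by
    rw [← Fin.succ_zero_eq_one, Fin.succ_succAbove_succ, Fin.succAbove_zero]
  have hcol : ∀ i : Fin m, g i.succ.succ 1 = 0 := fun i => by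
    rw [hsymm.apply]
    exact hshift _ (by simp)
  have hcorner : ((g.submatrix (Fin.succAbove 1) (Fin.succAbove 0)).submatrix
      (Fin.succAbove 0) Fin.succ) = gCorner (n := m+1) g := by
    ext i j
    simp only [submatrix_apply, Fin.succAbove_zero, hsucc]
    rfl
  rw [det_succ_column_zero, Fin.sum_univ_succ, hcorner]
  simp [hsucc, hcol]

/-- The determinant of a metric matrix with zero shift, in terms of its boundary and corner
blocks. -/
lemma det_eq_bdry_sub_corner {n : ℕ} (hn : 2 ≤ n) (g : Matrix (Fin (n+1)) (Fin (n+1)) ℝ)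
    (hsymm : g.IsSymm) (hshift : ∀ a : Fin (n+1), 2 ≤ (a : ℕ) → g 1 a = 0) :
    g.det = g 1 1 * (gBdry g).det - (g 0 1) ^ 2 * (gCorner g).det := by
  obtain ⟨m, rfl⟩ : ∃ m, n = m + 1 := ⟨n - 1, by omega⟩
  have hrow : ∀ i : Fin m, g 1 i.succ.succ = 0 := fun i => hshift _ (by simp)
  rw [det_succ_row g 1, Fin.sum_univ_succ, Fin.sum_univ_succ,
    det_minor_eq_corner g hsymm hshift, hsymm.apply 0 1]
  simp only [hrow, Fin.succ_zero_eq_one, gBdry]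
  simp
  ring

/-- With `g₁₁ = f²`, zero shift and `det g_Σ ≠ 0`, the corner angle `α = -g₀₁` satisfies
`α² = (f²·det g_𝒞 - det g)/det g_Σ`; hence it is determined up to sign by the data
`(g₁₁, det g, det g_𝒞, det g_Σ)`. -/
theorem stmt8 (n : ℕ) (hn : 2 ≤ n) (f f' : ℝ)
    (g g' : Matrix (Fin (n+1)) (Fin (n+1)) ℝ)
    (hsymm : g.IsSymm) (h11 : g 1 1 = f ^ 2)
    (hshift : ∀ a : Fin (n+1), 2 ≤ (a : ℕ) → g 1 a = 0)
    (hSig : (gCorner g).det ≠ 0)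
    (hsymm' : g'.IsSymm) (h11' : g' 1 1 = f' ^ 2)
    (hshift' : ∀ a : Fin (n+1), 2 ≤ (a : ℕ) → g' 1 a = 0) :
    (-(g 0 1)) ^ 2 = (f ^ 2 * (gBdry g).det - g.det) / (gCorner g).det ∧
    (g' 1 1 = g 1 1 → g'.det = g.det → (gBdry g').det = (gBdry g).det →
      (gCorner g').det = (gCorner g).det →
      (g' 0 1 = g 0 1 ∨ g' 0 1 = -(g 0 1))) := by
  have h := det_eq_bdry_sub_corner hn g hsymm hshift
  have h' := det_eq_bdry_sub_corner hn g' hsymm' hshift'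
  refine ⟨?_, fun e11 ed eB eC => ?_⟩
  · rw [eq_div_iff hSig, h, h11]
    ring
  · rw [e11, ed, eB, eC] at h'
    refine sq_eq_sq_iff_eq_or_eq_neg.mp (mul_right_cancel₀ hSig ?_)
    linarith
end

section
/- Linearization of the conformal-volume scalar μ: let n ≥ 2 and let t ↦ g(t) be a curve of real symmetric (n+1)×(n+1) matrices (indexed by {0,1,…,n}) that is differentiable at t = 0, with g(0) = γ, g'(0) = h, det γ < 0 and det γ_𝒞 < 0. Define μ(t) = √(-det g(t)) · (-det g_𝒞(t))^{-1/n}, which is defined for t near 0. Then μ is differentiable at t = 0 with μ'(0) = ( (1/2)·tr(γ⁻¹h) - (1/n)·tr(γ_𝒞⁻¹ h_𝒞) ) · μ(0), where h_𝒞 is the submatrix of h obtained by deleting row and column 1. -/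
/-!
Jacobi's formula `(det A)' = tr(A⁻¹ A') det A` does all the work: differentiating the Leibniz
expansion one column at a time gives `∑ j, det(A with column j replaced by that of A')`, which by
Cramer's rule is `tr(adj(A) A')`. Applied to `g` and to its boundary block, whose derivative is
the boundary block of `h`, it gives the logarithmic derivatives of the two negated determinants;
these are positive at `0`, so the power rule with exponents `1/2` and `-1/n` and the product rule
yield `μ'(0)`.
-/

open Matrix

/-- Jacobi's formula for a curve of matrices differentiable entrywise, in adjugate form. -/
lemma hasDerivAt_det_adjugate {m : ℕ} (A : ℝ → Matrix (Fin m) (Fin m) ℝ)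
    (B : Matrix (Fin m) (Fin m) ℝ) (t₀ : ℝ)
    (hA : ∀ i j, HasDerivAt (fun t => A t i j) (B i j) t₀) :
    HasDerivAt (fun t => (A t).det) ((A t₀).adjugate * B).trace t₀ := by
  have key : ((A t₀).adjugate * B).trace = ∑ σ : Equiv.Perm (Fin m),
      ((Equiv.Perm.sign σ : ℤ) : ℝ) *
        ∑ j, (∏ k ∈ Finset.univ.erase j, A t₀ (σ k) k) • B (σ j) j := by
    have hcol : ∀ j, ((A t₀).adjugate * B) j j = ((A t₀).updateCol j (fun i => B i j)).det := by
      intro j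
      rw [← Matrix.cramer_apply, Matrix.cramer_eq_adjugate_mulVec]
      rfl
    simp only [Matrix.trace, Matrix.diag_apply, hcol, Matrix.det_apply', Finset.mul_sum]
    rw [Finset.sum_comm]
    refine Finset.sum_congr rfl fun σ _ => Finset.sum_congr rfl fun j _ => ?_
    rw [← Finset.prod_erase_mul _ _ (Finset.mem_univ j), smul_eq_mul, Matrix.updateCol_self]
    congr 2
    refine Finset.prod_congr rfl fun k hk => ?_
    rw [Matrix.updateCol_ne (Finset.ne_of_mem_erase hk)]
  rw [key]
  simp only [Matrix.det_apply']
  exact HasDerivAt.fun_sum fun σ _ =>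
    (HasDerivAt.fun_finsetProd fun k _ => hA (σ k) k).const_mul _

/-- Jacobi's formula in logarithmic form, at a point where the determinant is nonzero. -/
lemma hasDerivAt_det_inv {m : ℕ} (A : ℝ → Matrix (Fin m) (Fin m) ℝ)
    (B : Matrix (Fin m) (Fin m) ℝ) (t₀ : ℝ)
    (hA : ∀ i j, HasDerivAt (fun t => A t i j) (B i j) t₀) (h0 : (A t₀).det ≠ 0) :
    HasDerivAt (fun t => (A t).det) (((A t₀)⁻¹ * B).trace * (A t₀).det) t₀ := by
  convert hasDerivAt_det_adjugate A B t₀ hA using 1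
  rw [Matrix.inv_def, Ring.inverse_eq_inv', Matrix.smul_mul, Matrix.trace_smul, smul_eq_mul]
  field_simp

/-- Linearization of the conformal-volume scalar `μ(t) = √(-det g(t))·(-det g_𝒞(t))^{-1/n}`:
it is defined near `0`, differentiable at `0`, with
`μ'(0) = ((1/2)·tr(γ⁻¹h) - (1/n)·tr(γ_𝒞⁻¹ h_𝒞))·μ(0)`. -/
theorem stmt11 (n : ℕ) (hn : 2 ≤ n) (g : ℝ → Matrix (Fin (n+1)) (Fin (n+1)) ℝ)
    (γ h : Matrix (Fin (n+1)) (Fin (n+1)) ℝ)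
    (hsym : ∀ t, (g t).IsSymm) (hg0 : g 0 = γ)
    (hderiv : ∀ i j, HasDerivAt (fun t => g t i j) (h i j) 0)
    (hdet : γ.det < 0) (hdetC : (gBdry γ).det < 0) :
    (∀ᶠ t in nhds (0 : ℝ), (g t).det < 0 ∧ (gBdry (g t)).det < 0) ∧
    HasDerivAt
      (fun t => Real.sqrt (-(g t).det) * (-(gBdry (g t)).det) ^ (-(1 : ℝ) / n))
      ((1 / 2 * (γ⁻¹ * h).trace - 1 / n * ((gBdry γ)⁻¹ * gBdry h).trace) *
        (Real.sqrt (-γ.det) * (-(gBdry γ).det) ^ (-(1 : ℝ) / n))) 0 := by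
  
  subst hg0
  have h1 := hasDerivAt_det_inv g h 0 hderiv hdet.ne
  have h2 := hasDerivAt_det_inv (fun t => gBdry (g t)) (gBdry h) 0
    (fun i j => hderiv _ _) hdetC.ne
  refine ⟨(h1.continuousAt.eventually_lt_const hdet).and
    (h2.continuousAt.eventually_lt_const hdetC), ?_⟩
  have hp : 0 < -(g 0).det := neg_pos.mpr hdet
  have hpC : 0 < -(gBdry (g 0)).det := neg_pos.mpr hdetC
  have h3 := h1.fun_neg.sqrt hp.ne'
  have h4 := h2.fun_neg.rpow_const (p := -(1 : ℝ) / n) (Or.inl hpC.ne')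
  refine (h3.fun_mul h4).congr_deriv ?_
  rw [Real.rpow_sub_one hpC.ne']
  have hs : Real.sqrt (-(g 0).det) ≠ 0 := (Real.sqrt_pos.mpr hp).ne'
  have hsq : -(g 0).det = Real.sqrt (-(g 0).det) ^ 2 := (Real.sq_sqrt hp.le).symm
  have e1 : -(((g 0)⁻¹ * h).trace * (g 0).det) / (2 * Real.sqrt (-(g 0).det)) =
      1 / 2 * ((g 0)⁻¹ * h).trace * Real.sqrt (-(g 0).det) := by
    rw [← mul_neg, div_eq_iff (by positivity)]
    linear_combination ((g 0)⁻¹ * h).trace * hsq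
  rw [e1]
  have hC := hdetC.ne
  field_simp
  ring
end
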